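/- Let H be a complex Hilbert space of dimension at least 2 and let A = αP + γI, where P is an orthogonal projection on H and α, γ ∈ ℝ. Then for every bounded self-adjoint operator B on H, the numerical range of the commutator is symmetric about the origin: W(AB − BA) = −W(AB − BA). -/

import Mathlib

open scoped InnerProductSpace

noncomputable def numRange {H : Type*} [NormedAddCommGroup H] [InnerProductSpace ℂ H]
    (T : H →L[ℂ] H) : Set ℂ :=
  {z | ∃ x : H, ‖x‖ = 1 ∧ ⟪x, T x⟫_ℂ = z}

/-!
Write `P` for the orthogonal projection onto a subspace `K`. The commutator `⁅α P + γ I, B⁆` equals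
`⁅P, α B⁆`, so it maps `K` into `Kᗮ` and `Kᗮ` into `K`. It therefore anticommutes with the
reflection `2 P - I` in `K`. This reflection is an isometry, so it permutes the unit vectors, and
replacing `x` by its reflection changes the sign of `⟪x, ⁅P, α B⁆ x⟫`.
-/

section NumericalRange

variable {H H' : Type*} [NormedAddCommGroup H] [InnerProductSpace ℂ H]
  [NormedAddCommGroup H'] [InnerProductSpace ℂ H']

theorem numRange_neg (T : H →L[ℂ] H) : numRange (-T) = -numRange T := by
  ext z
  simp [numRange, neg_eq_iff_eq_neg]

theorem numRange_subset_of_isometry_intertwines (V : H →ₗᵢ[ℂ] H')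
    {T : H →L[ℂ] H} {S : H' →L[ℂ] H'} (hV : ∀ x, V (T x) = S (V x)) : numRange T ⊆ numRange S := by
  rintro _ ⟨x, hx, rfl⟩
  exact ⟨V x, by rw [V.norm_map, hx], by rw [← hV, V.inner_map_map]⟩

theorem numRange_eq_neg_of_isometry_anticommutes (V : H →ₗᵢ[ℂ] H) {T : H →L[ℂ] H}
    (hV : ∀ x, V (T x) = -T (V x)) : numRange T = -numRange T := by
  have hsub : numRange T ⊆ -numRange T :=
    numRange_neg T ▸ numRange_subset_of_isometry_intertwines V hV
  exact hsub.antisymm (Set.neg_subset.mpr hsub)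

end NumericalRange

section Commutator

theorem lie_smul_add_smul_one {R S : Type*} [CommSemiring R] [Ring S] [Algebra R S]
    (α γ : R) (p b : S) : ⁅α • p + γ • (1 : S), b⁆ = ⁅p, α • b⁆ := by
  simp only [Ring.lie_def, add_mul, mul_add, smul_mul_assoc, mul_smul_comm, one_mul, mul_one,
    add_sub_add_right_eq_sub]

theorem semiconjBy_two_nsmul_sub_one_lie {S : Type*} [Ring S] {p : S} (hp : IsIdempotentElem p)
    (b : S) : SemiconjBy (2 • p - 1) ⁅p, b⁆ (-⁅p, b⁆) := by
  have left_mul : (2 • p - 1) * ⁅p, b⁆ = p * b + b * p - 2 • (p * b * p) := by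
    have hppb : p * (p * b) = p * b := by rw [← mul_assoc, hp.eq]
    simp only [Ring.lie_def, two_nsmul, sub_mul, add_mul, mul_sub, one_mul, mul_assoc, hppb]
    abel
  have right_mul : ⁅p, b⁆ * (2 • p - 1) = 2 • (p * b * p) - (p * b + b * p) := by
    simp only [Ring.lie_def, two_nsmul, sub_mul, mul_add, mul_sub, mul_one, mul_assoc, hp.eq]
    abel
  rw [SemiconjBy, neg_mul, left_mul, right_mul, neg_sub]

theorem reflection_lie_starProjection {𝕜 H : Type*} [RCLike 𝕜] [NormedAddCommGroup H]
    [InnerProductSpace 𝕜 H] (K : Submodule 𝕜 H) [K.HasOrthogonalProjection]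
    (B : H →L[𝕜] H) (x : H) :
    K.reflection (⁅K.starProjection, B⁆ x) = -⁅K.starProjection, B⁆ (K.reflection x) := by
  simpa [Submodule.reflection_apply] using
    DFunLike.congr_fun
      (semiconjBy_two_nsmul_sub_one_lie K.isIdempotentElem_starProjection B).eq x

end Commutator

theorem stmt_6_general {H : Type*} [NormedAddCommGroup H] [InnerProductSpace ℂ H]
    (K : Submodule ℂ H) [K.HasOrthogonalProjection] (α γ : ℂ)
    (A : H →L[ℂ] H) (hA : A = α • K.starProjection + γ • 1) (B : H →L[ℂ] H) :
    numRange (A * B - B * A) = -numRange (A * B - B * A) := by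
  rw [← Ring.lie_def, hA, lie_smul_add_smul_one]
  exact numRange_eq_neg_of_isometry_anticommutes K.reflection.toLinearIsometry
    (reflection_lie_starProjection K (α • B))

theorem stmt_6 {H : Type*} [NormedAddCommGroup H] [InnerProductSpace ℂ H] [CompleteSpace H]
    (hdim : 2 ≤ Module.rank ℂ H)
    (P : H →L[ℂ] H) (hP : IsSelfAdjoint P) (hP2 : P * P = P) (α γ : ℝ)
    (A : H →L[ℂ] H) (hA : A = (α : ℂ) • P + (γ : ℂ) • 1) :
    ∀ B : H →L[ℂ] H, IsSelfAdjoint B →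
      numRange (A * B - B * A) = -numRange (A * B - B * A) := by
  obtain ⟨K, _, rfl⟩ := isStarProjection_iff_eq_starProjection.mp ⟨hP2, hP⟩
  exact fun B _ => stmt_6_general K α γ A hA B
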